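/- Let p be an odd prime. Let i(1) ∈ ℕ and define (i(n))_{n≥1} recursively by i(3n−1) = i(n) + 1 and i(3n) = i(3n+1) = 0 for n ≥ 1. Let ε₁, ε₂ ∈ F_p* with ε₂² + 2ε₁ ≠ 0, and set λ₁ = (ε₂² + 2ε₁)(−2)^{i(1)}/ε₂. Let α ∈ F(p) be the continued fraction of type (p, 1, 1) with first partial quotient a₁ = λ₁ A_{i(1),1} and α^p = ε₁ P₁ α₂ + ε₂ Q₁. Then a_n = λ_n A_{i(n),1} for all n ≥ 1, where (λ_n)_{n≥2} is given by λ_{3n−1} = ε₁^{(−1)^n} λ_n, λ_{3n} = −ε₁^{(−1)^{n+1}} δ_n⁻¹, λ_{3n+1} = −λ_{3n}⁻¹, and (δ_n)_{n≥1} in F_p* is given by δ₁ = −2ε₁/ε₂ and δ_{3n−1} = −ε₁^{(−1)^n} δ_n/2, δ_{3n} = −ε₁^{(−1)^{n+1}} δ_n⁻¹, δ_{3n+1} = 2δ_{3n}⁻¹. -/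

import Mathlib

/-!
The proof propagates an equation along the complete quotients. Write `P = T² - 1`, `c_i = (-2)⁻ⁱ`
and `x_n = ε₁ ^ ((-1) ^ (n+1))`. The invariant is

  `α_n ^ p = x_n P α_{3n-1} + (δ_n + λ_n c_{i(n)}) T`,

which for `n = 1` is the hypothesis on `α`.

Division by `P` gives `A_i ^ p = P A_{i+1} + c_i T` (`Aseq_spec`). Inserting `a_n = λ_n A_{i(n)}` and
`α_n ^ p = a_n ^ p + 1/B` with `B = α_{n+1} ^ p` into the invariant yields
`α_{3n-1} = (λ_n/x_n) A_{i(n)+1} + (-δ_n T + 1/B) / (x_n P)`. As `|B| ≥ |T|³`, three successive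
polynomial parts can be read off: they are `(λ_n/x_n) A_{i(n)+1}`, `-(x_n/δ_n) T` and `(δ_n/x_n) T`,
and what remains is `B = x_n⁻¹ P α_{3n+2} + δ_n⁻¹ T` (`cf_step`, `cf_power_step`). This is the
invariant for `n + 1` provided `δ_n⁻¹ = δ_{n+1} + λ_{n+1} c_{i(n+1)}`, which follows from the scalar
recursions (`delta_relation`). Every index `≥ 2` is one of `3n-1`, `3n`, `3n+1` with `n ≥ 1`, so
all partial quotients are obtained.
-/

noncomputable section
open Polynomial

def Tval (F : Type) [Field F] : LaurentSeries F :=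
  (HahnSeries.single (1 : ℤ) (1 : F) : LaurentSeries F)⁻¹

def adeg {F : Type} [Field F] (α : LaurentSeries F) : ℤ := -α.order

def pEval {F : Type} [Field F] (f : Polynomial F) : LaurentSeries F :=
  f.eval₂ HahnSeries.C (Tval F)

def pEvalHom (F : Type) [Field F] : Polynomial F →+* LaurentSeries F :=
  Polynomial.eval₂RingHom HahnSeries.C (Tval F)

/-- substitution `T ↦ v T` on Laurent series in `1/T`
(the underlying Hahn-series variable is `1/T`). -/
def scaleT {F : Type} [Field F] (v : F) (α : LaurentSeries F) : LaurentSeries F where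
  coeff n := v ^ (-n) * α.coeff n
  isPWO_support' := α.isPWO_support'.mono (fun n hn => by
    simp only [Function.mem_support, ne_eq] at hn ⊢
    intro h; exact hn (by rw [h, mul_zero]))

/-- coefficient-wise map of Laurent series along a ring homomorphism. -/
def lsMap {F L : Type} [Field F] [Field L] (f : F →+* L) (α : LaurentSeries F) :
    LaurentSeries L where
  coeff n := f (α.coeff n)
  isPWO_support' := α.isPWO_support'.mono (fun n hn => by
    simp only [Function.mem_support, ne_eq] at hn ⊢
    intro h; exact hn (by rw [h, map_zero]))

/-- integral (polynomial) part of a Laurent series in `1/T`. -/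
def intPart {F : Type} [Field F] (α : LaurentSeries F) : Polynomial F :=
  ∑ j ∈ Finset.range ((-α.order).toNat + 1),
    Polynomial.C (α.coeff (-(j : ℤ))) * Polynomial.X ^ j

def IsCFOf {F : Type} [Field F] (α : LaurentSeries F) (a : ℕ → Polynomial F)
    (β : ℕ → LaurentSeries F) : Prop :=
  β 1 = α ∧ ∀ n, 1 ≤ n →
    0 < (a n).degree ∧ 0 < adeg (β n) ∧ β n = pEval (a n) + (β (n + 1))⁻¹

def fcf {F : Type} [DivisionRing F] : List F → F
  | [] => 0
  | [c] => c
  | c :: d :: t => c + (fcf (d :: t))⁻¹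

def fcfWD {F : Type} [DivisionRing F] : List F → Prop
  | [] => True
  | [_] => True
  | _ :: d :: t => fcf (d :: t) ≠ 0 ∧ fcfWD (d :: t)

def polyInt {F : Type} [Field F] (f : Polynomial F) : Polynomial F :=
  ∑ i ∈ Finset.range (f.natDegree + 1),
    Polynomial.C (f.coeff i * ((i : F) + 1)⁻¹) * Polynomial.X ^ (i + 1)

def Pka {F : Type} [Field F] (k : ℕ) (a : F) : Polynomial F :=
  (Polynomial.X ^ 2 + Polynomial.C a) ^ k

def Qka {F : Type} [Field F] (k : ℕ) (a : F) : Polynomial F := polyInt (Pka (k - 1) a)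

def Pk {F : Type} [Field F] (k : ℕ) : Polynomial F := (Polynomial.X ^ 2 - 1) ^ k

def Qk {F : Type} [Field F] (k : ℕ) : Polynomial F := polyInt (Pk (k - 1))

def Aseq (F : Type) [Field F] (p k : ℕ) : ℕ → Polynomial F
  | 0 => Polynomial.X
  | i + 1 => Aseq F p k i ^ p / Pk k

def vseq (F : Type) [Field F] (k : ℕ) : ℕ → F
  | 0 => 1
  | 1 => 2 * k - 1
  | i + 1 =>
      (((2 * (k : ℤ) - 2 * i - 1) * (2 * (k : ℤ) - 2 * i + 1) : ℤ) : F) *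
        (((i : F) * (2 * k - i))⁻¹) * (vseq F k i)⁻¹

def theta (F : Type) [Field F] (k : ℕ) : F :=
  (-1) ^ k * ∏ j ∈ Finset.Icc 1 k, (1 - (2 * (j : F))⁻¹)

def continuant {R : Type} [CommRing R] (a : ℕ → R) (c0 c1 : R) : ℕ → R
  | 0 => c0
  | 1 => c1
  | n + 2 => a (n + 2) * continuant a c0 c1 (n + 1) + continuant a c0 c1 n

def largestPow (m N : ℕ) : ℕ := sSup {j : ℕ | m ^ j ∣ N}

def nu0 {F : Type} [Field F] (a : ℕ → Polynomial F) : ℝ :=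
  Filter.limsup
    (fun n => ((a (n + 1)).natDegree : ℝ) / ∑ j ∈ Finset.Icc 1 n, ((a j).natDegree : ℝ))
    Filter.atTop

/-! ### Laurent series in `1/T` and polynomial parts -/

theorem pEval_eq {F : Type} [Field F] (f : F[X]) : pEval f = pEvalHom F f := rfl

theorem pEvalHom_C {F : Type} [Field F] (c : F) : pEvalHom F (C c) = HahnSeries.C c := by
  simp [pEvalHom]

theorem pEvalHom_X {F : Type} [Field F] : pEvalHom F X = Tval F := by
  simp [pEvalHom]

theorem Tval_eq {F : Type} [Field F] : Tval F = HahnSeries.single (-1 : ℤ) (1 : F) := by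
  rw [Tval, HahnSeries.inv_single]; simp

theorem orderTop_Tval {F : Type} [Field F] : (Tval F).orderTop = ((-1 : ℤ) : WithTop ℤ) := by
  rw [Tval_eq]; exact HahnSeries.orderTop_single one_ne_zero

theorem orderTop_C {F : Type} [Field F] {c : F} (hc : c ≠ 0) :
    (HahnSeries.C c : LaurentSeries F).orderTop = ((0 : ℤ) : WithTop ℤ) := by
  exact HahnSeries.orderTop_single hc

/-- The `T ^ j` coefficient of a polynomial sits at exponent `-j`, because the Hahn-series variable
is `1/T`. -/
theorem pEvalHom_coeff {F : Type} [Field F] (f : F[X]) (j : ℕ) :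
    (pEvalHom F f).coeff (-(j : ℤ)) = f.coeff j := by
  induction f using Polynomial.induction_on' with
  | add f g hf hg => simp [hf, hg]
  | monomial n c =>
    rw [← C_mul_X_pow_eq_monomial, map_mul, map_pow, pEvalHom_C, pEvalHom_X, Tval_eq,
      HahnSeries.single_pow, HahnSeries.C_mul_eq_smul]
    simp [HahnSeries.coeff_single, coeff_X_pow]

/-- Uniqueness of the polynomial part. The bound `0 < orderTop` expresses absolute value `< 1`. -/
theorem poly_eq_of_small {F : Type} [Field F] {f g : F[X]} {u v : LaurentSeries F}
    (hu : 0 < u.orderTop) (hv : 0 < v.orderTop)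
    (h : pEvalHom F f + u = pEvalHom F g + v) : f = g := by
  ext j
  have hc := congrArg (fun s => HahnSeries.coeff s (-(j : ℤ))) h
  have h0 : (((-(j : ℤ)) : ℤ) : WithTop ℤ) ≤ 0 := by exact_mod_cast (by omega : (-(j:ℤ)) ≤ 0)
  simpa [pEvalHom_coeff, HahnSeries.coeff_eq_zero_of_lt_orderTop (h0.trans_lt hu),
    HahnSeries.coeff_eq_zero_of_lt_orderTop (h0.trans_lt hv)] using hc

/-- A quotient `N / D` has absolute value `< 1` when `N` is smaller than `D`; `N = 0` is allowed. -/
theorem small_of_mul_eq {F : Type} [Field F] {u D N : LaurentSeries F} {d : ℤ}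
    (h : u * D = N) (hD : D.orderTop = (d : WithTop ℤ)) (hN : (d : WithTop ℤ) < N.orderTop) :
    0 < u.orderTop := by
  by_cases hu : u = 0
  · simp [hu]
  · rw [← h, HahnSeries.orderTop_mul, hD] at hN
    rw [← HahnSeries.order_eq_orderTop_of_ne_zero hu] at hN ⊢
    norm_cast at hN ⊢
    omega

/-- Inverses of complete quotients are nonzero and of absolute value `< 1`. -/
theorem small_inv {F : Type} [Field F] {u : LaurentSeries F} (h : 0 < adeg u) :
    u ≠ 0 ∧ 0 < (u⁻¹).orderTop := by
  have hu : u ≠ 0 := by rintro rfl; simp [adeg] at h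
  refine ⟨hu, small_of_mul_eq (inv_mul_cancel₀ hu)
    (HahnSeries.order_eq_orderTop_of_ne_zero hu).symm ?_⟩
  rw [HahnSeries.orderTop_one]
  unfold adeg at h
  exact_mod_cast (by omega : u.order < 0)

/-! ### The polynomials `A_i` modulo `T² - 1` -/

theorem two_ne_zero_of_odd (p : ℕ) [Fact p.Prime] (hodd : Odd p) : (2 : ZMod p) ≠ 0 := by
  refine Ring.two_ne_zero ?_
  rw [ZMod.ringChar_zmod_n]
  rintro rfl
  exact absurd hodd (by decide)

/-- Division of `A_i ^ p` by `T² - 1`: the quotient is `A_{i+1}` and the remainder `(-2)⁻ⁱ T`. The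
remainder is found by interpolating `A_i ^ p` at `±1`; differentiating the division identity, whose
left side has derivative zero, then gives the values of `A_{i+1}` at `±1`. -/
theorem Aseq_spec (p : ℕ) [Fact p.Prime] (hodd : Odd p) (i : ℕ) :
    ((Aseq (ZMod p) p 1 i).eval 1 = ((-2) ^ i)⁻¹ ∧
      (Aseq (ZMod p) p 1 i).eval (-1) = -((-2) ^ i)⁻¹) ∧
    Aseq (ZMod p) p 1 i ^ p =
      (X ^ 2 - 1) * Aseq (ZMod p) p 1 (i + 1) + C (((-2) ^ i)⁻¹) * X := by
  have two := two_ne_zero_of_odd p hodd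
  have key : ∀ (A : (ZMod p)[X]) (c : ZMod p), A.eval 1 = c → A.eval (-1) = -c →
      A ^ p = (X ^ 2 - 1) * (A ^ p / Pk 1) + C c * X := by
    intro A c h1 h2
    have hd : (X ^ 2 - 1 : (ZMod p)[X]) ∣ A ^ p - C c * X := by
      have e : (X ^ 2 - 1 : (ZMod p)[X]) = (X - C 1) * (X - C (-1)) := by
        simp; ring
      rw [e]
      refine IsCoprime.mul_dvd (isCoprime_X_sub_C_of_isUnit_sub ?_) ?_ ?_
      · rw [isUnit_iff_ne_zero]; intro h; apply two; linear_combination h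
      · rw [dvd_iff_isRoot]; simp [h1, ZMod.pow_card]
      · rw [dvd_iff_isRoot]; simp [h2, ZMod.pow_card]
    obtain ⟨q, hq⟩ := hd
    have hm : (X ^ 2 - 1 : (ZMod p)[X]).Monic := by monicity!
    have hq' := (div_modByMonic_unique (f := A ^ p) q (C c * X) hm
      ⟨by linear_combination -hq, by
        refine lt_of_le_of_lt (degree_C_mul_X_le c) ?_
        rw [show (X ^ 2 - 1 : (ZMod p)[X]).degree = 2 by compute_degree!]; decide⟩).1
    rw [Pk, pow_one, ← divByMonic_eq_div _ hm, hq']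
    linear_combination hq
  induction i with
  | zero => exact ⟨by simp [Aseq], key _ _ (by simp [Aseq]) (by simp [Aseq])⟩
  | succ i ih =>
    suffices h : (Aseq (ZMod p) p 1 (i+1)).eval 1 = ((-2) ^ (i+1))⁻¹ ∧
      (Aseq (ZMod p) p 1 (i+1)).eval (-1) = -((-2) ^ (i+1))⁻¹ from ⟨h, key _ _ h.1 h.2⟩
    have hder := congrArg derivative ih.2
    have e : ((-2 : ZMod p) ^ (i + 1))⁻¹ = -(((-2) ^ i)⁻¹ / 2) := by
      rw [pow_succ, mul_inv, inv_neg, div_eq_mul_inv]; ring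
    simp only [derivative_pow, CharP.cast_eq_zero, C_0, zero_mul, map_add, derivative_mul,
      map_sub, derivative_X, derivative_one, derivative_C] at hder
    have e1 := congrArg (eval 1) hder
    have e2 := congrArg (eval (-1)) hder
    simp at e1 e2
    rw [e]
    constructor
    · field_simp
      linear_combination -e1
    · field_simp
      linear_combination e2

/-! ### One step of the expansion -/

/-- One step of the expansion. If `x P b0 = l A P - d T + 1/B` with `P = T² - 1` and
`|B| ≥ |T|³`, the next three partial quotients of `b0` are `(l/x) A`, `-(x/d) T` and `(d/x) T`, and
the complete quotient `b3` after them satisfies `B = x⁻¹ P b3 + d⁻¹ T`. Each polynomial part is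
recognised by bounding the corresponding fractional part. -/
theorem cf_step {F : Type} [Field F] {x l d : F} (hx : x ≠ 0) (hd : d ≠ 0) {A a0 a1 a2 : F[X]}
    {B b0 b1 b2 b3 : LaurentSeries F} (hB0 : B ≠ 0)
    (hB : ((3 : ℤ) : WithTop ℤ) ≤ (B⁻¹).orderTop)
    (h0 : b0 = pEval a0 + b1⁻¹) (h1 : b1 = pEval a1 + b2⁻¹) (h2 : b2 = pEval a2 + b3⁻¹)
    (hb1 : 0 < adeg b1) (hb2 : 0 < adeg b2) (hb3 : 0 < adeg b3)
    (h : HahnSeries.C l * pEval A * (Tval F ^ 2 - 1) - HahnSeries.C d * Tval F + B⁻¹ =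
      HahnSeries.C x * (Tval F ^ 2 - 1) * b0) :
    a0 = C (x⁻¹ * l) * A ∧ a1 = C (-x * d⁻¹) * X ∧ a2 = C (d * x⁻¹) * X ∧
      B = HahnSeries.C x⁻¹ * (Tval F ^ 2 - 1) * b3 + HahnSeries.C d⁻¹ * Tval F := by
  obtain ⟨b1n, b1s⟩ := small_inv hb1
  obtain ⟨b2n, b2s⟩ := small_inv hb2
  obtain ⟨b3n, b3s⟩ := small_inv hb3
  have hT := orderTop_Tval (F := F)
  have hCx := orderTop_C hx
  have hCd := orderTop_C hd
  have hX : (HahnSeries.C x : LaurentSeries F) ≠ 0 := by simpa using hx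
  have hD : (HahnSeries.C d : LaurentSeries F) ≠ 0 := by simpa using hd
  simp only [pEval_eq] at *
  have hTsq : (Tval F ^ 2 - 1).orderTop = ((-2 : ℤ) : WithTop ℤ) := by
    have : (Tval F ^ 2).orderTop = ((-2 : ℤ) : WithTop ℤ) := by
      rw [pow_two, HahnSeries.orderTop_mul, hT]; rfl
    rw [sub_eq_add_neg, HahnSeries.orderTop_add_eq_left, this]
    rw [this, HahnSeries.orderTop_neg, HahnSeries.orderTop_one]
    exact_mod_cast (by norm_num : (-2 : ℤ) < 0)
  have hN : (-(HahnSeries.C d * Tval F) + B⁻¹).orderTop = ((-1 : ℤ) : WithTop ℤ) := by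
    have : (-(HahnSeries.C d * Tval F)).orderTop = ((-1 : ℤ) : WithTop ℤ) := by
      rw [HahnSeries.orderTop_neg, HahnSeries.orderTop_mul, hT, hCd]; rfl
    rw [HahnSeries.orderTop_add_eq_left, this]
    rw [this]
    exact lt_of_lt_of_le (by exact_mod_cast (by norm_num : (-1 : ℤ) < 3)) hB
  have hTB : 0 < (Tval F * B⁻¹).orderTop := by
    rw [HahnSeries.orderTop_mul, hT]
    calc (0 : WithTop ℤ) < ((-1 : ℤ) : WithTop ℤ) + ((3 : ℤ) : WithTop ℤ) := by
          exact_mod_cast (by norm_num : (0 : ℤ) < -1 + 3)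
      _ ≤ _ := by gcongr
  have hM : (-HahnSeries.C d + Tval F * B⁻¹).orderTop = ((0 : ℤ) : WithTop ℤ) := by
    rw [HahnSeries.orderTop_add_eq_left, HahnSeries.orderTop_neg, hCd]
    rw [HahnSeries.orderTop_neg, hCd]; exact hTB
  -- The identities below only use the relations `c * c⁻¹ = 1` for the quantities inverted.
  have hXX : HahnSeries.C x * HahnSeries.C x⁻¹ = (1 : LaurentSeries F) := by
    rw [← map_mul, mul_inv_cancel₀ hx, map_one]
  have hDD : HahnSeries.C d * HahnSeries.C d⁻¹ = (1 : LaurentSeries F) := by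
    rw [← map_mul, mul_inv_cancel₀ hd, map_one]
  have hBB : B * B⁻¹ = 1 := mul_inv_cancel₀ hB0
  have r1 : (b0 - pEvalHom F (C (x⁻¹ * l) * A)) * (HahnSeries.C x * (Tval F ^ 2 - 1)) =
      -(HahnSeries.C d * Tval F) + B⁻¹ := by
    rw [map_mul, pEvalHom_C, map_mul]
    linear_combination -h - HahnSeries.C l * pEvalHom F A * (Tval F ^ 2 - 1) * hXX
  have ea0 : a0 = C (x⁻¹ * l) * A := by
    refine poly_eq_of_small b1s (small_of_mul_eq r1 (d := -2) ?_ ?_) (by rw [← h0]; ring)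
    · rw [HahnSeries.orderTop_mul, hCx, hTsq]; rfl
    · rw [hN]; exact_mod_cast (by norm_num : (-2 : ℤ) < -1)
  have eb1 : b1 * (-(HahnSeries.C d * Tval F) + B⁻¹) = HahnSeries.C x * (Tval F ^ 2 - 1) := by
    rw [← ea0, h0, add_sub_cancel_left] at r1
    rw [← r1, mul_inv_cancel_left₀ b1n]
  have r2 : (b1 - pEvalHom F (C (-x * d⁻¹) * X)) *
      (HahnSeries.C d * (-(HahnSeries.C d * Tval F) + B⁻¹)) =
      HahnSeries.C x * (-HahnSeries.C d + Tval F * B⁻¹) := by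
    rw [map_mul, pEvalHom_C, pEvalHom_X, map_mul, map_neg]
    linear_combination HahnSeries.C d * eb1 +
      HahnSeries.C x * Tval F * (-(HahnSeries.C d * Tval F) + B⁻¹) * hDD
  have ea1 : a1 = C (-x * d⁻¹) * X := by
    refine poly_eq_of_small b2s (small_of_mul_eq r2 (d := -1) ?_ ?_) (by rw [← h1]; ring)
    · rw [HahnSeries.orderTop_mul, hCd, hN]; rfl
    · rw [HahnSeries.orderTop_mul, hCx, hM]; exact_mod_cast (by norm_num : (-1 : ℤ) < 0)
  have eb2 : b2 * (HahnSeries.C x * (-HahnSeries.C d + Tval F * B⁻¹)) =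
      HahnSeries.C d * (-(HahnSeries.C d * Tval F) + B⁻¹) := by
    rw [← ea1, sub_eq_of_eq_add' h1] at r2
    rw [← r2, mul_inv_cancel_left₀ b2n]
  have r3 : (b2 - pEvalHom F (C (d * x⁻¹) * X)) *
      (HahnSeries.C x * (-HahnSeries.C d + Tval F * B⁻¹)) =
      -HahnSeries.C d * (Tval F ^ 2 - 1) * B⁻¹ := by
    rw [map_mul, pEvalHom_C, pEvalHom_X, map_mul]
    linear_combination eb2 -
      HahnSeries.C d * Tval F * (-HahnSeries.C d + Tval F * B⁻¹) * hXX
  have ea2 : a2 = C (d * x⁻¹) * X := by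
    refine poly_eq_of_small b3s (small_of_mul_eq r3 (d := 0) ?_ ?_) (by rw [← h2]; ring)
    · rw [HahnSeries.orderTop_mul, hCx, hM]; rfl
    · rw [HahnSeries.orderTop_mul, HahnSeries.orderTop_mul, HahnSeries.orderTop_neg, hCd, hTsq]
      calc ((0 : ℤ) : WithTop ℤ)
          < ((0 : ℤ) : WithTop ℤ) + ((-2 : ℤ) : WithTop ℤ) + ((3 : ℤ) : WithTop ℤ) := by
            exact_mod_cast (by norm_num : (0 : ℤ) < 0 + -2 + 3)
        _ ≤ _ := by gcongr
  refine ⟨ea0, ea1, ea2, ?_⟩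
  have eb3 : b3 * (-HahnSeries.C d * (Tval F ^ 2 - 1) * B⁻¹) =
      HahnSeries.C x * (-HahnSeries.C d + Tval F * B⁻¹) := by
    rw [← ea2, sub_eq_of_eq_add' h2] at r3
    rw [← r3, mul_inv_cancel_left₀ b3n]
  apply mul_left_cancel₀ (mul_ne_zero (mul_ne_zero hX hD) (inv_ne_zero hB0))
  linear_combination eb3 + HahnSeries.C x * HahnSeries.C d * hBB -
    HahnSeries.C x * B⁻¹ * Tval F * hDD - HahnSeries.C d * B⁻¹ * (Tval F ^ 2 - 1) * b3 * hXX

/-! ### The scalar recursions -/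

theorem delta_ne_zero {K : Type} [Field K] (two : (2 : K) ≠ 0) {ε₁ ε₂ : K} (hε₁ : ε₁ ≠ 0)
    (hε₂ : ε₂ ≠ 0) {δ : ℕ → K} (hδ1 : δ 1 = -2 * ε₁ / ε₂)
    (hδrec : ∀ n, 1 ≤ n →
      δ (3 * n - 1) = -ε₁ ^ ((-1 : ℤ) ^ n) * δ n / 2 ∧
      δ (3 * n) = -ε₁ ^ ((-1 : ℤ) ^ (n + 1)) * (δ n)⁻¹ ∧
      δ (3 * n + 1) = 2 * (δ (3 * n))⁻¹) (n : ℕ) (hn : 1 ≤ n) : δ n ≠ 0 := by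
  induction n using Nat.strong_induction_on with
  | _ n ih =>
    have hz (k : ℤ) : ε₁ ^ k ≠ 0 := zpow_ne_zero k hε₁
    rcases hn.eq_or_lt with rfl | hn
    · rw [hδ1]; simp [two, hε₁, hε₂]
    · obtain ⟨m, hm, hmn, h⟩ : ∃ m, 1 ≤ m ∧ m < n ∧ (n = 3 * m - 1 ∨ n = 3 * m ∨ n = 3 * m + 1) :=
        ⟨(n + 1) / 3, by omega, by omega, by omega⟩
      have hd := ih m hmn hm
      obtain ⟨h1, h2, h3⟩ := hδrec m hm
      rcases h with rfl | rfl | rfl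
      · rw [h1]; simp [hz, hd, two]
      · rw [h2]; simp [hz, hd]
      · rw [h3, h2]; simp [hz, hd, two]

/-- The scalar identity closing the induction: the coefficient of `T` in the equation for
`α_{n+1} ^ p`, which comes out as `δ_n⁻¹`, equals `δ_{n+1} + λ_{n+1} (-2) ^ (-i(n+1))`. -/
theorem delta_relation {K : Type} [Field K] (two : (2 : K) ≠ 0) {ε₁ ε₂ : K} (hε₁ : ε₁ ≠ 0)
    (hε₂ : ε₂ ≠ 0) {idx : ℕ → ℕ} {lam δ : ℕ → K} (hδ1 : δ 1 = -2 * ε₁ / ε₂)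
    (hbase : δ 1 + lam 1 * ((-2) ^ idx 1)⁻¹ = ε₂)
    (hidx1 : ∀ n, 1 ≤ n → idx (3 * n - 1) = idx n + 1)
    (hidx2 : ∀ n, 1 ≤ n → idx (3 * n) = 0 ∧ idx (3 * n + 1) = 0)
    (hlamrec : ∀ n, 1 ≤ n →
      lam (3 * n - 1) = ε₁ ^ ((-1 : ℤ) ^ n) * lam n ∧
      lam (3 * n) = -ε₁ ^ ((-1 : ℤ) ^ (n + 1)) * (δ n)⁻¹ ∧
      lam (3 * n + 1) = -(lam (3 * n))⁻¹)
    (hδrec : ∀ n, 1 ≤ n →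
      δ (3 * n - 1) = -ε₁ ^ ((-1 : ℤ) ^ n) * δ n / 2 ∧
      δ (3 * n) = -ε₁ ^ ((-1 : ℤ) ^ (n + 1)) * (δ n)⁻¹ ∧
      δ (3 * n + 1) = 2 * (δ (3 * n))⁻¹)
    (hδ : ∀ n, 1 ≤ n → δ n ≠ 0) (n : ℕ) (hn : 1 ≤ n) :
    δ (n + 1) + lam (n + 1) * ((-2) ^ idx (n + 1))⁻¹ = (δ n)⁻¹ := by
  induction n using Nat.strong_induction_on with
  | _ n ih =>
    obtain ⟨m, h⟩ : ∃ m, (1 ≤ m ∧ n = 3 * m - 1) ∨ (1 ≤ m ∧ n = 3 * m) ∨ n = 3 * m + 1 :=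
      ⟨(n + 1) / 3, by omega⟩
    have hinv (k : ℕ) : ε₁ ^ ((-1 : ℤ) ^ (k + 1)) = (ε₁ ^ ((-1 : ℤ) ^ k))⁻¹ := by
      rw [← zpow_neg, pow_succ]; simp
    rcases h with ⟨hm, rfl⟩ | ⟨hm, rfl⟩ | rfl
    · obtain ⟨h1, h2, h3⟩ := hδrec m hm
      rw [show 3 * m - 1 + 1 = 3 * m by omega, h1, h2, (hlamrec m hm).2.1, (hidx2 m hm).1, hinv]
      have hz := zpow_ne_zero ((-1 : ℤ) ^ m) hε₁
      have hd := hδ m hm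
      field_simp
      ring
    · obtain ⟨h1, h2, h3⟩ := hδrec m hm
      rw [h3, (hlamrec m hm).2.2, (hidx2 m hm).2, (hlamrec m hm).2.1, h2, hinv]
      have hz := zpow_ne_zero ((-1 : ℤ) ^ m) hε₁
      have hd := hδ m hm
      field_simp
      ring
    · have h1 := (hδrec (m + 1) (by omega)).1
      have h2 := (hlamrec (m + 1) (by omega)).1
      have h3 := hidx1 (m + 1) (by omega)
      rw [show 3 * (m + 1) - 1 = 3 * m + 1 + 1 by omega] at h1 h2 h3
      rw [h1, h2, h3, hinv, pow_succ (-2 : K), mul_inv, inv_neg]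
      -- Both summands at `3m + 2` are `-ε₁ ^ ± 1 / 2` times those at `m + 1`.
      trans -(ε₁ ^ ((-1 : ℤ) ^ m))⁻¹ / 2 *
        (δ (m + 1) + lam (m + 1) * ((-2) ^ idx (m + 1))⁻¹)
      · rw [div_eq_mul_inv, div_eq_mul_inv]; ring
      rcases Nat.eq_zero_or_pos m with rfl | hm
      · rw [hbase]
        simp only [mul_zero, zero_add, hδ1, pow_zero, zpow_one]
        field_simp
      · rw [ih m (by omega) hm, (hδrec m hm).2.2, (hδrec m hm).2.1, hinv]
        have hz := zpow_ne_zero ((-1 : ℤ) ^ m) hε₁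
        have hd := hδ m hm
        field_simp

/-! ### Propagation along the continued fraction -/

/-- `cf_step` applied to `u ^ p`, where `u = a + 1/v` and `a = l A_i`. By Frobenius
`u ^ p = l A_i ^ p + 1/v ^ p`, and `Aseq_spec` rewrites `A_i ^ p`. Since `p ≥ 3`,
`|v ^ p| ≥ |T|³`. -/
theorem cf_power_step (p : ℕ) [Fact p.Prime] (hodd : Odd p) {x l d : ZMod p} (hx : x ≠ 0)
    (hd : d ≠ 0) {i : ℕ} {a a0 a1 a2 : (ZMod p)[X]}
    {u v b0 b1 b2 b3 : LaurentSeries (ZMod p)}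
    (hv : 0 < adeg v) (hu : u = pEval a + v⁻¹) (ha : a = C l * Aseq (ZMod p) p 1 i)
    (h0 : b0 = pEval a0 + b1⁻¹) (h1 : b1 = pEval a1 + b2⁻¹) (h2 : b2 = pEval a2 + b3⁻¹)
    (hb1 : 0 < adeg b1) (hb2 : 0 < adeg b2) (hb3 : 0 < adeg b3)
    (h : u ^ p = HahnSeries.C x * (Tval (ZMod p) ^ 2 - 1) * b0 +
      HahnSeries.C (d + l * ((-2) ^ i)⁻¹) * Tval (ZMod p)) :
    a0 = C (x⁻¹ * l) * Aseq (ZMod p) p 1 (i + 1) ∧ a1 = C (-x * d⁻¹) * X ∧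
      a2 = C (d * x⁻¹) * X ∧
      v ^ p = HahnSeries.C x⁻¹ * (Tval (ZMod p) ^ 2 - 1) * b3 +
        HahnSeries.C d⁻¹ * Tval (ZMod p) := by
  obtain ⟨vn, -⟩ := small_inv hv
  have hp3 : 3 ≤ p := by
    have := (Fact.out : p.Prime).two_le
    rcases hodd with ⟨k, rfl⟩
    omega
  refine cf_step hx hd (pow_ne_zero p vn) ?_ h0 h1 h2 hb1 hb2 hb3 ?_
  · have hi : v * v⁻¹ = 1 := mul_inv_cancel₀ vn
    have ho := HahnSeries.order_mul vn (inv_ne_zero vn)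
    rw [hi, HahnSeries.order_one] at ho
    unfold adeg at hv
    rw [← inv_pow, ← HahnSeries.order_eq_orderTop_of_ne_zero (pow_ne_zero p (inv_ne_zero vn)),
      HahnSeries.order_pow]
    have : (3 : ℤ) ≤ p • (v⁻¹).order := by
      rw [nsmul_eq_mul]
      have : (3 : ℤ) ≤ p := by exact_mod_cast hp3
      nlinarith
    exact_mod_cast this
  · have : CharP (LaurentSeries (ZMod p)) p :=
      charP_of_injective_ringHom (HahnSeries.C_injective (Γ := ℤ) (R := ZMod p)) p
    have hA := congrArg (pEvalHom (ZMod p)) (Aseq_spec p hodd i).2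
    rw [hu, add_pow_char, ha, pEval_eq, ← map_pow, mul_pow, ← C_pow, ZMod.pow_card, map_mul,
      hA] at h
    simp only [map_add, map_mul, map_sub, map_pow, map_one, pEvalHom_C, pEvalHom_X] at h
    rw [pEval_eq, ← inv_pow]
    linear_combination h

/-- **Corollary 1.** The case `l = k = 1` of Theorem 1: for an odd prime
`p`, index sequence `i(3n−1) = i(n)+1`, `i(3n) = i(3n+1) = 0`, `ε₂² + 2ε₁ ≠ 0` and
`λ₁ = (ε₂² + 2ε₁)(−2)^{i(1)}/ε₂`, every partial quotient of the continued fraction of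
type `(p,1,1)` satisfies `a_n = λ_n A_{i(n),1}`, with `(λ_n)` and `(δ_n)` given by the
stated recursions. -/
theorem stmt13 (p : ℕ) [Fact p.Prime] (hodd : Odd p) (idx : ℕ → ℕ)
    (hidx1 : ∀ n, 1 ≤ n → idx (3 * n - 1) = idx n + 1)
    (hidx2 : ∀ n, 1 ≤ n → idx (3 * n) = 0 ∧ idx (3 * n + 1) = 0)
    (ε₁ ε₂ : ZMod p) (hε₁ : ε₁ ≠ 0) (hε₂ : ε₂ ≠ 0) (hne : ε₂ ^ 2 + 2 * ε₁ ≠ 0)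
    (lam δ : ℕ → ZMod p)
    (hlam1 : lam 1 = (ε₂ ^ 2 + 2 * ε₁) * (-2) ^ idx 1 / ε₂)
    (hδ1 : δ 1 = -2 * ε₁ / ε₂)
    (hlamrec : ∀ n, 1 ≤ n →
      lam (3 * n - 1) = ε₁ ^ ((-1 : ℤ) ^ n) * lam n ∧
      lam (3 * n) = -ε₁ ^ ((-1 : ℤ) ^ (n + 1)) * (δ n)⁻¹ ∧
      lam (3 * n + 1) = -(lam (3 * n))⁻¹)
    (hδrec : ∀ n, 1 ≤ n →
      δ (3 * n - 1) = -ε₁ ^ ((-1 : ℤ) ^ n) * δ n / 2 ∧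
      δ (3 * n) = -ε₁ ^ ((-1 : ℤ) ^ (n + 1)) * (δ n)⁻¹ ∧
      δ (3 * n + 1) = 2 * (δ (3 * n))⁻¹)
    (α : LaurentSeries (ZMod p)) (a : ℕ → Polynomial (ZMod p))
    (β : ℕ → LaurentSeries (ZMod p)) (hcf : IsCFOf α a β)
    (ha1 : a 1 = Polynomial.C (lam 1) * Aseq (ZMod p) p 1 (idx 1))
    (heq : α ^ p = HahnSeries.C ε₁ * pEval (Pk 1) * β 2 + HahnSeries.C ε₂ * pEval (Qk 1)) :
    ∀ n, 1 ≤ n → a n = Polynomial.C (lam n) * Aseq (ZMod p) p 1 (idx n) := by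
  have two := two_ne_zero_of_odd p hodd
  have hδ := delta_ne_zero two hε₁ hε₂ hδ1 hδrec
  have hc : δ 1 + lam 1 * ((-2) ^ idx 1)⁻¹ = ε₂ := by
    have : (-2 : ZMod p) ^ idx 1 ≠ 0 := pow_ne_zero _ (neg_ne_zero.mpr two)
    rw [hδ1, hlam1]
    field_simp
    ring
  have hrel := delta_relation two hε₁ hε₂ hδ1 hc hidx1 hidx2 hlamrec hδrec hδ
  obtain ⟨hβ1, hcf⟩ := hcf
  have hinv (k : ℕ) : (ε₁ ^ ((-1 : ℤ) ^ (k + 1)))⁻¹ = ε₁ ^ ((-1 : ℤ) ^ k) := by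
    rw [← zpow_neg, pow_succ]; simp
  -- The equation for `β n ^ p` and the value of `a n` give `a (3n-1)`, `a (3n)`, `a (3n+1)` and the
  -- equation for `β (n+1) ^ p`; `a n` is available because `n ≤ 3n - 2`.
  have main : ∀ n, 1 ≤ n →
      (∀ k, 1 ≤ k → k ≤ 3 * n - 2 → a k = C (lam k) * Aseq (ZMod p) p 1 (idx k)) ∧
      β n ^ p = HahnSeries.C (ε₁ ^ ((-1 : ℤ) ^ (n + 1))) * (Tval (ZMod p) ^ 2 - 1) *
        β (3 * n - 1) +
        HahnSeries.C (δ n + lam n * ((-2) ^ idx n)⁻¹) * Tval (ZMod p) := by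
    intro n hn
    induction n, hn using Nat.le_induction with
    | base =>
      refine ⟨fun k h1 h2 => ?_, ?_⟩
      · obtain rfl : k = 1 := by omega
        exact ha1
      · have hQ : (Qk 1 : (ZMod p)[X]) = X := by simp [Qk, Pk, polyInt]
        rw [hβ1, heq, hc, hQ, pEval_eq, pEval_eq, pEvalHom_X]
        simp [Pk, pEvalHom_X]
    | succ n hn ih =>
      obtain ⟨iha, ihβ⟩ := ih
      have e0 := hcf (3 * n - 1) (by omega)
      have e1 := hcf (3 * n) (by omega)
      have e2 := hcf (3 * n + 1) (by omega)
      have e3 := hcf (3 * n + 2) (by omega)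
      rw [show 3 * n - 1 + 1 = 3 * n by omega] at e0
      obtain ⟨c0, c1, c2, c3⟩ := cf_power_step p hodd (zpow_ne_zero _ hε₁) (hδ n hn)
        (hcf (n + 1) (by omega)).2.1 (hcf n hn).2.2 (iha n hn (by omega))
        e0.2.2 e1.2.2 e2.2.2 e1.2.1 e2.2.1 e3.2.1 ihβ
      obtain ⟨l0, l1, l2⟩ := hlamrec n hn
      refine ⟨fun k h1 h2 => ?_, ?_⟩
      · rcases (by omega : k ≤ 3 * n - 2 ∨ k = 3 * n - 1 ∨ k = 3 * n ∨ k = 3 * n + 1) with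
          hk | rfl | rfl | rfl
        · exact iha k h1 hk
        · rw [c0, l0, hidx1 n hn, hinv]
        · rw [c1, l1, (hidx2 n hn).1, Aseq]
        · rw [c2, l2, (hidx2 n hn).2, Aseq, l1, neg_mul, inv_neg, neg_neg, mul_inv, inv_inv,
            mul_comm (δ n)]
      · rw [hrel n hn, c3, hinv, show 3 * (n + 1) - 1 = 3 * n + 2 by omega,
          show (-1 : ℤ) ^ (n + 1 + 1) = (-1) ^ n by ring]
  intro n hn
  exact (main n hn).1 n hn (by omega)
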